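/- Let d ≥ 1, n ≥ d+1, let c be a real number with 0 < c, and let T be a d-hypertree on [n] over F_2 with average filling-volume μ(T) ≥ c·C(n-1,d). Then there exist τ ∈ T and σ ∈ Cut(τ,T) such that |Cut(τ,T)| · |Fill(σ,T)| ≥ (c³/8)·C(n,d+1)·C(n-1,d). -/

import Mathlib

open Finset symmDiff

/-- The vertex set `[n] = {1, …, n}`. -/
def rng (n : ℕ) : Finset ℕ := Finset.Icc 1 n

/-- The set of `d`-simplices (i.e. `(d+1)`-element subsets) on the vertex set `V`. -/
def simplices (V : Finset ℕ) (d : ℕ) : Finset (Finset ℕ) :=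
  V.powerset.filter fun σ => σ.card = d + 1

/-- The mod-2 boundary of a set `X` of simplices: the set of faces `τ` of codimension one
(`|τ| + 1 = |σ|`) contained in an odd number of members of `X`. -/
def bd (X : Finset (Finset ℕ)) : Finset (Finset ℕ) :=
  (X.biUnion fun σ => σ.powerset).filter
    fun τ => Odd (X.filter fun σ => τ ⊆ σ ∧ τ.card + 1 = σ.card).card

/-- A set of simplices is acyclic (a forest) over `F_2` if no nonempty subset has
empty boundary. -/
def IsAcyclic (F : Finset (Finset ℕ)) : Prop :=
  ∀ Y ⊆ F, Y ≠ ∅ → bd Y ≠ ∅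

/-- A `d`-hypertree on `V`: a maximal acyclic set of `d`-simplices on `V`. -/
def IsHypertreeOn (V : Finset ℕ) (d : ℕ) (T : Finset (Finset ℕ)) : Prop :=
  T ⊆ simplices V d ∧ IsAcyclic T ∧
    ∀ G, T ⊆ G → G ⊆ simplices V d → IsAcyclic G → G = T

/-- A simple cycle over `F_2`: a nonempty set with empty boundary, no nonempty proper
subset of which has empty boundary. -/
def IsSimpleCycle (Z : Finset (Finset ℕ)) : Prop :=
  Z ≠ ∅ ∧ bd Z = ∅ ∧ ∀ Y ⊂ Z, Y ≠ ∅ → bd Y ≠ ∅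

/-- Collapsibility: `X` can be reduced to `∅` by repeatedly removing a simplex `σ ∈ X`
containing a codimension-one face contained in no other current member of `X`. -/
inductive Collapsible : Finset (Finset ℕ) → Prop
  | empty : Collapsible ∅
  | step (X : Finset (Finset ℕ)) (σ τ : Finset ℕ) (hσ : σ ∈ X) (hτ : τ ⊆ σ)
      (hcard : τ.card + 1 = σ.card) (huniq : ∀ σ' ∈ X, τ ⊆ σ' → σ' = σ)
      (h : Collapsible (X.erase σ)) : Collapsible X

/-- The cone over `X` with apex `v`. -/
def cone (v : ℕ) (X : Finset (Finset ℕ)) : Finset (Finset ℕ) :=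
  X.image (insert v)

/-- The link of the vertex `v` in `X`. -/
def link (v : ℕ) (X : Finset (Finset ℕ)) : Finset (Finset ℕ) :=
  (X.filter fun σ => v ∈ σ).image fun σ => σ.erase v

/-- `fill Z T`: the subset `F ⊆ T` with `∂F = Z` (when it exists; it is unique when `T`
is a hypertree and `Z` a cycle). -/
noncomputable def fill (Z T : Finset (Finset ℕ)) : Finset (Finset ℕ) :=
  if h : ∃ F, F ⊆ T ∧ bd F = Z then h.choose else ∅

/-- The average filling-volume `μ(T)` of a `d`-hypertree `T` on `[n]`. -/
noncomputable def fillVolAvg (n d : ℕ) (T : Finset (Finset ℕ)) : ℝ :=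
  (∑ σ ∈ simplices (rng n) d, ((fill (bd {σ}) T).card : ℝ)) / (n.choose (d + 1) : ℝ)

open Classical in
/-- The cut of `τ` in `T`: the set of `d`-simplices `σ` on `[n]` such that
`T ⊕ {τ} ⊕ {σ}` is a `d`-hypertree on `[n]`. -/
noncomputable def cut (n d : ℕ) (τ : Finset ℕ) (T : Finset (Finset ℕ)) : Finset (Finset ℕ) :=
  (simplices (rng n) d).filter fun σ => IsHypertreeOn (rng n) d ((T ∆ {τ}) ∆ {σ})

/-!
Join `τ ∈ T` to a simplex `σ` whenever `τ ∈ Fill(σ,T)`. By basis exchange, the degree of `τ` in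
this bipartite graph is at most `|Cut(τ,T)|`, while the degree of `σ` is `|Fill(σ,T)|` and the
number of edges is `e = μ(T)·C(n,d+1)`. Each side of the graph contributes at most its size to
the sum of the inverse degrees over the edges, so by averaging and AM-GM some edge has a product
of degrees at least `e² / (|T|·C(n,d+1))`; finally `|T| ≤ C(n-1,d)`, because an acyclic set of
simplices is determined by the faces of its boundary that avoid a given vertex.
-/

section Counting

variable {α β γ : Type*} [DecidableEq α] [DecidableEq β]

lemma odd_card_symmDiff (s t : Finset α) : Odd #(s ∆ t) ↔ ¬(Odd #s ↔ Odd #t) := by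
  have hst : #(s ∆ t) = #(s \ t) + #(t \ s) := by
    rw [symmDiff_def, sup_eq_union, card_union_of_disjoint disjoint_sdiff_sdiff]
  have hs := card_sdiff_add_card_inter s t
  have ht := card_sdiff_add_card_inter t s
  rw [inter_comm] at ht
  simp only [Nat.odd_iff]
  omega

lemma sum_inv_card_fiber (s : Finset γ) (f : γ → α) :
    ∑ x ∈ s, (#{y ∈ s | f y = f x} : ℝ)⁻¹ = #(s.image f) := by
  have hfiber (x) (hx : x ∈ s) :
      (1 : ℝ) = ∑ z ∈ s with f z = f x, (#{y ∈ s | f y = f z} : ℝ)⁻¹ := by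
    have hpos : (#{y ∈ s | f y = f x} : ℝ) ≠ 0 :=
      Nat.cast_ne_zero.2 (card_ne_zero_of_mem (mem_filter.2 ⟨hx, rfl⟩))
    rw [sum_congr rfl fun z hz ↦ by rw [(mem_filter.1 hz).2], sum_const, nsmul_eq_mul,
      mul_inv_cancel₀ hpos]
  rw [← sum_image' (f := fun _ ↦ (1 : ℝ)) _ hfiber, sum_const, nsmul_eq_mul, mul_one]

lemma exists_sq_card_le_mul_card_fiber {s : Finset γ} (hs : s.Nonempty) (f : γ → α) (g : γ → β) :
    ∃ x ∈ s, #s ^ 2 ≤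
      #(s.image f) * #(s.image g) * (#{y ∈ s | f y = f x} * #{y ∈ s | g y = g x}) := by
  suffices ∃ x ∈ s, (#s : ℝ) ^ 2 ≤
      #(s.image f) * #(s.image g) * (#{y ∈ s | f y = f x} * #{y ∈ s | g y = g x}) by
    exact_mod_cast this
  set a := (#(s.image f) : ℝ)
  set b := (#(s.image g) : ℝ)
  set F := fun x ↦ (#{y ∈ s | f y = f x} : ℝ)
  set G := fun x ↦ (#{y ∈ s | g y = g x} : ℝ)
  have ha : 0 < a := Nat.cast_pos.2 (hs.image f).card_pos
  have hb : 0 < b := Nat.cast_pos.2 (hs.image g).card_pos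
  have he : (0 : ℝ) < #s := Nat.cast_pos.2 hs.card_pos
  have hsum : ∑ x ∈ s, (b * (F x)⁻¹ + a * (G x)⁻¹) ≤ ∑ _x ∈ s, 2 * (a * b) / #s := by
    rw [sum_add_distrib, ← mul_sum, ← mul_sum, sum_inv_card_fiber, sum_inv_card_fiber, sum_const,
      nsmul_eq_mul, mul_div_cancel₀ _ he.ne']
    exact le_of_eq (by ring)
  obtain ⟨x, hx, hle⟩ := exists_le_of_sum_le hs hsum
  have hF : 0 < F x := Nat.cast_pos.2 (card_pos.2 ⟨x, mem_filter.2 ⟨hx, rfl⟩⟩)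
  have hG : 0 < G x := Nat.cast_pos.2 (card_pos.2 ⟨x, mem_filter.2 ⟨hx, rfl⟩⟩)
  have hamgm : 4 * (a * b / (F x * G x)) ≤ 4 * ((a * b) ^ 2 / #s ^ 2) :=
    calc 4 * (a * b / (F x * G x)) = 4 * (b * (F x)⁻¹) * (a * (G x)⁻¹) := by field_simp
      _ ≤ (b * (F x)⁻¹ + a * (G x)⁻¹) ^ 2 := four_mul_le_sq_add _ _
      _ ≤ (2 * (a * b) / #s) ^ 2 := by gcongr
      _ = 4 * ((a * b) ^ 2 / #s ^ 2) := by ring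
  refine ⟨x, hx, ?_⟩
  field_simp at hamgm
  linarith

end Counting

section Boundary

variable {V σ τ : Finset ℕ} {X Y Z : Finset (Finset ℕ)} {d v : ℕ}

lemma mem_bd : τ ∈ bd X ↔ Odd #{σ ∈ X | τ ⊆ σ ∧ #τ + 1 = #σ} := by
  simp only [bd, mem_filter, mem_biUnion, mem_powerset, and_iff_right_iff_imp]
  intro hodd
  obtain ⟨σ, hσ⟩ := card_pos.1 hodd.pos
  exact ⟨σ, (mem_filter.1 hσ).1, (mem_filter.1 hσ).2.1⟩

lemma mem_bd_singleton : τ ∈ bd {σ} ↔ τ ⊆ σ ∧ #τ + 1 = #σ := by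
  rw [mem_bd, filter_singleton]
  split_ifs with h <;> simp [h]

lemma exists_mem_of_mem_bd (hτ : τ ∈ bd X) : ∃ σ ∈ X, τ ⊆ σ ∧ #τ + 1 = #σ := by
  obtain ⟨σ, hσ⟩ := card_pos.1 (mem_bd.1 hτ).pos
  exact ⟨σ, mem_filter.1 hσ⟩

lemma bd_empty : bd ∅ = ∅ := by
  simp [bd]

lemma bd_symmDiff (X Y : Finset (Finset ℕ)) : bd (X ∆ Y) = bd X ∆ bd Y := by
  ext τ
  have hfilter : {σ ∈ X ∆ Y | τ ⊆ σ ∧ #τ + 1 = #σ} =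
      {σ ∈ X | τ ⊆ σ ∧ #τ + 1 = #σ} ∆ {σ ∈ Y | τ ⊆ σ ∧ #τ + 1 = #σ} := by
    ext σ
    simp only [mem_filter, mem_symmDiff]
    tauto
  rw [mem_symmDiff, mem_bd, mem_bd, mem_bd, hfilter, odd_card_symmDiff]
  tauto

lemma bd_erase (hσ : σ ∈ X) : bd (X.erase σ) = bd X ∆ bd {σ} := by
  rw [← bd_symmDiff, erase_eq, symmDiff_of_ge (singleton_subset_iff.2 hσ)]

lemma filter_bd_singleton_eq_image_insert {ρ : Finset ℕ} (hρ : ρ ⊆ σ) (hcard : #ρ + 2 = #σ) :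
    {τ ∈ bd {σ} | ρ ⊆ τ ∧ #ρ + 1 = #τ} = (σ \ ρ).image (insert · ρ) := by
  ext τ
  simp only [mem_filter, mem_bd_singleton, mem_image, mem_sdiff]
  constructor
  · rintro ⟨⟨hτσ, -⟩, hρτ⟩
    obtain ⟨x, hx, rfl⟩ := exists_eq_insert_iff.2 hρτ
    exact ⟨x, ⟨hτσ (mem_insert_self x ρ), hx⟩, rfl⟩
  · rintro ⟨x, ⟨hxσ, hxρ⟩, rfl⟩
    rw [card_insert_of_notMem hxρ]
    exact ⟨⟨insert_subset hxσ hρ, by lia⟩, subset_insert x ρ, rfl⟩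

lemma bd_bd_singleton (σ : Finset ℕ) : bd (bd {σ}) = ∅ := by
  refine eq_empty_iff_forall_notMem.2 fun ρ hρ ↦ ?_
  obtain ⟨τ, hτ, hρτ, hcard⟩ := exists_mem_of_mem_bd hρ
  rw [mem_bd_singleton] at hτ
  have hρσ : ρ ⊆ σ := hρτ.trans hτ.1
  have hinj : Set.InjOn (insert · ρ) (σ \ ρ : Finset ℕ) :=
    (insert_inj_on ρ).mono fun x hx ↦ (mem_sdiff.1 hx).2
  rw [mem_bd, filter_bd_singleton_eq_image_insert hρσ (by lia), card_image_of_injOn hinj,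
    card_sdiff_of_subset hρσ, Nat.odd_iff] at hρ
  lia

lemma bd_bd (X : Finset (Finset ℕ)) : bd (bd X) = ∅ := by
  induction X using Finset.induction_on with
  | empty => rw [bd_empty, bd_empty]
  | insert σ s hσ ih =>
    have hinsert : insert σ s = {σ} ∆ s :=
      (disjoint_singleton_left.2 hσ).symmDiff_eq_sup.symm
    rw [hinsert, bd_symmDiff, bd_symmDiff, bd_bd_singleton, ih, symmDiff_self, bot_eq_empty]

lemma eq_empty_of_bd_eq_empty_of_forall_mem (hZ : bd Z = ∅) (hv : ∀ τ ∈ Z, v ∈ τ) : Z = ∅ := by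
  refine eq_empty_iff_forall_notMem.2 fun τ hτ ↦ ?_
  have hcard := card_erase_add_one (hv τ hτ)
  have hfilter : {σ ∈ Z | τ.erase v ⊆ σ ∧ #(τ.erase v) + 1 = #σ} = {τ} := by
    ext σ
    simp only [mem_filter, mem_singleton]
    constructor
    · rintro ⟨hσ, hsub, hσcard⟩
      have hτσ : τ ⊆ σ := insert_erase (hv τ hτ) ▸ insert_subset (hv σ hσ) hsub
      exact (eq_of_subset_of_card_le hτσ (by lia)).symm
    · rintro rfl
      exact ⟨hτ, erase_subset v σ, hcard⟩
  have hmem : τ.erase v ∈ bd Z := by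
    rw [mem_bd, hfilter, card_singleton]
    exact odd_one
  simp [hZ] at hmem

lemma bd_eq_of_filter_notMem_eq (h : {τ ∈ bd X | v ∉ τ} = {τ ∈ bd Y | v ∉ τ}) : bd X = bd Y := by
  rw [← symmDiff_eq_empty, ← bd_symmDiff]
  refine eq_empty_of_bd_eq_empty_of_forall_mem (v := v) (bd_bd _) fun τ hτ ↦ ?_
  have hiff := Finset.ext_iff.1 h τ
  simp only [mem_filter] at hiff
  rw [bd_symmDiff, mem_symmDiff] at hτ
  tauto

lemma mem_simplices : σ ∈ simplices V d ↔ σ ⊆ V ∧ #σ = d + 1 := by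
  simp only [simplices, mem_filter, mem_powerset]

lemma card_simplices (V : Finset ℕ) (d : ℕ) : #(simplices V d) = (#V).choose (d + 1) := by
  rw [simplices, ← powersetCard_eq_filter, card_powersetCard]

lemma bd_subset_powersetCard (hX : X ⊆ simplices V d) : bd X ⊆ V.powersetCard d := by
  intro τ hτ
  obtain ⟨σ, hσ, hτσ, hcard⟩ := exists_mem_of_mem_bd hτ
  have hσV := mem_simplices.1 (hX hσ)
  exact mem_powersetCard.2 ⟨hτσ.trans hσV.1, by lia⟩

end Boundary

section Hypertree

variable {V σ τ : Finset ℕ} {T F : Finset (Finset ℕ)} {d n : ℕ}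

lemma IsAcyclic.injOn_bd (hT : IsAcyclic T) : Set.InjOn bd {Y | Y ⊆ T} := by
  intro X hX Y hY hXY
  by_contra hne
  refine hT (X ∆ Y) ?_ (mt symmDiff_eq_empty.1 hne) ?_
  · exact symmDiff_subset_union.trans (union_subset hX hY)
  · rw [bd_symmDiff, hXY, symmDiff_self, bot_eq_empty]

lemma IsAcyclic.card_le_choose (hT : IsAcyclic T) (hTV : T ⊆ simplices V d) :
    #T ≤ (#V - 1).choose d := by
  obtain rfl | ⟨v, hv⟩ := V.eq_empty_or_nonempty
  · have hcard := card_le_card hTV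
    rw [card_simplices, card_empty, Nat.choose_zero_succ] at hcard
    exact hcard.trans (Nat.zero_le _)
  have hmaps : ∀ Y ∈ T.powerset, {τ ∈ bd Y | v ∉ τ} ∈ ((V.erase v).powersetCard d).powerset := by
    intro Y hY
    refine mem_powerset.2 fun τ hτ ↦ ?_
    obtain ⟨hτY, hvτ⟩ := mem_filter.1 hτ
    obtain ⟨hτV, hcard⟩ :=
      mem_powersetCard.1 (bd_subset_powersetCard ((mem_powerset.1 hY).trans hTV) hτY)
    exact mem_powersetCard.2 ⟨subset_erase.2 ⟨hτV, hvτ⟩, hcard⟩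
  have hinj : Set.InjOn (fun Y ↦ {τ ∈ bd Y | v ∉ τ}) (T.powerset : Set (Finset (Finset ℕ))) :=
    fun X hX Y hY hXY ↦ hT.injOn_bd (mem_powerset.1 hX) (mem_powerset.1 hY)
      (bd_eq_of_filter_notMem_eq hXY)
  have hpow := card_le_card_of_injOn _ hmaps hinj
  rwa [card_powerset, card_powerset, card_powersetCard, card_erase_of_mem hv,
    Nat.pow_le_pow_iff_right one_lt_two] at hpow

lemma isHypertreeOn_iff : IsHypertreeOn V d T ↔
    T ⊆ simplices V d ∧ IsAcyclic T ∧ ∀ σ ∈ simplices V d, ∃ F ⊆ T, bd F = bd {σ} := by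
  refine and_congr_right fun hTV ↦ and_congr_right fun hT ↦ ⟨fun hmax σ hσ ↦ ?_, ?_⟩
  · by_cases hσT : σ ∈ T
    · exact ⟨{σ}, singleton_subset_iff.2 hσT, rfl⟩
    have hcyc : ¬IsAcyclic (insert σ T) := fun h ↦
      hσT (hmax _ (subset_insert σ T) (insert_subset hσ hTV) h ▸ mem_insert_self σ T)
    simp only [IsAcyclic, not_forall, not_not] at hcyc
    obtain ⟨Y, hY, hne, hbd⟩ := hcyc
    have hσY : σ ∈ Y := by_contra fun h ↦ hT Y ((subset_insert_iff_of_notMem h).1 hY) hne hbd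
    refine ⟨Y.erase σ, subset_insert_iff.1 hY, ?_⟩
    rw [bd_erase hσY, hbd, ← bot_eq_empty, bot_symmDiff]
  · intro hspan G hTG hGV hG
    refine (hTG.antisymm fun σ hσ ↦ ?_).symm
    obtain ⟨F, hFT, hF⟩ := hspan σ (hGV hσ)
    have hFσ : F = {σ} := hG.injOn_bd (hFT.trans hTG) (singleton_subset_iff.2 hσ) hF
    exact hFT (hFσ ▸ mem_singleton_self σ)

lemma IsHypertreeOn.insert_erase (hT : IsHypertreeOn V d T) (hσ : σ ∈ simplices V d) (hFT : F ⊆ T)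
    (hF : bd F = bd {σ}) (hτ : τ ∈ F) : IsHypertreeOn V d (insert σ (T.erase τ)) := by
  obtain ⟨hTV, hacyc, hspan⟩ := isHypertreeOn_iff.1 hT
  refine isHypertreeOn_iff.2 ⟨insert_subset hσ ((erase_subset τ T).trans hTV), ?_, ?_⟩
  · intro Y hY hne hbd
    by_cases hσY : σ ∈ Y
    · have hYT : Y.erase σ ⊆ T.erase τ := subset_insert_iff.1 hY
      have hbdY : bd (Y.erase σ) = bd F := by
        rw [bd_erase hσY, hbd, hF, ← bot_eq_empty, bot_symmDiff]
      have hYF := hacyc.injOn_bd (hYT.trans (erase_subset τ T)) hFT hbdY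
      exact notMem_erase τ T (hYT (hYF ▸ hτ))
    · exact hacyc Y (((subset_insert_iff_of_notMem hσY).1 hY).trans (erase_subset τ T)) hne hbd
  · intro ρ hρ
    obtain ⟨H, hHT, hH⟩ := hspan ρ hρ
    by_cases hτH : τ ∈ H
    · refine ⟨(H ∆ F) ∆ {σ}, ?_, ?_⟩
      · have hHF : H ∆ F ⊆ T.erase τ := subset_erase.2
          ⟨symmDiff_subset_union.trans (union_subset hHT hFT), by simp [mem_symmDiff, hτH, hτ]⟩
        exact symmDiff_subset_union.trans (union_subset (hHF.trans (subset_insert σ _))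
          (singleton_subset_iff.2 (mem_insert_self σ _)))
      · rw [bd_symmDiff, bd_symmDiff, hF, symmDiff_symmDiff_cancel_right, hH]
    · exact ⟨H, (subset_erase.2 ⟨hHT, hτH⟩).trans (subset_insert σ _), hH⟩

lemma IsHypertreeOn.symmDiff_singleton (hT : IsHypertreeOn V d T) (hσ : σ ∈ simplices V d)
    (hFT : F ⊆ T) (hF : bd F = bd {σ}) (hτ : τ ∈ F) : IsHypertreeOn V d ((T ∆ {τ}) ∆ {σ}) := by
  by_cases hσT : σ ∈ T
  · have hFσ := hT.2.1.injOn_bd hFT (singleton_subset_iff.2 hσT) hF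
    obtain rfl : τ = σ := mem_singleton.1 (hFσ ▸ hτ)
    rwa [symmDiff_symmDiff_cancel_right]
  · have hexch : (T ∆ {τ}) ∆ {σ} = insert σ (T.erase τ) := by
      have hστ : σ ∉ T.erase τ := mt mem_of_mem_erase hσT
      rw [symmDiff_of_ge (singleton_subset_iff.2 (hFT hτ)), ← erase_eq,
        (disjoint_singleton_right.2 hστ).symmDiff_eq_sup, sup_eq_union, union_comm, insert_eq]
    exact hexch ▸ hT.insert_erase hσ hFT hF hτ

lemma fill_subset (Z T : Finset (Finset ℕ)) : fill Z T ⊆ T := by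
  unfold fill
  split_ifs with h
  · exact h.choose_spec.1
  · exact empty_subset T

lemma IsHypertreeOn.bd_fill (hT : IsHypertreeOn V d T) (hσ : σ ∈ simplices V d) :
    bd (fill (bd {σ}) T) = bd {σ} := by
  have h := (isHypertreeOn_iff.1 hT).2.2 σ hσ
  rw [fill, dif_pos h]
  exact h.choose_spec.2

lemma IsHypertreeOn.mem_cut_of_mem_fill (hT : IsHypertreeOn (rng n) d T)
    (hσ : σ ∈ simplices (rng n) d) (hτ : τ ∈ fill (bd {σ}) T) : σ ∈ cut n d τ T := by
  classical
  exact mem_filter.2 ⟨hσ, hT.symmDiff_singleton hσ (fill_subset _ T) (hT.bd_fill hσ) hτ⟩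

lemma IsHypertreeOn.card_le_choose (hT : IsHypertreeOn (rng n) d T) : #T ≤ (n - 1).choose d := by
  simpa [rng] using hT.2.1.card_le_choose hT.1

lemma card_simplices_rng (n d : ℕ) : #(simplices (rng n) d) = n.choose (d + 1) := by
  simp [card_simplices, rng]

lemma IsHypertreeOn.fillVolAvg_le_choose (hT : IsHypertreeOn (rng n) d T) :
    fillVolAvg n d T ≤ (n - 1).choose d := by
  refine div_le_of_le_mul₀ (Nat.cast_nonneg _) (Nat.cast_nonneg _) ?_
  rw [mul_comm, ← card_simplices_rng, ← nsmul_eq_mul]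
  refine sum_le_card_nsmul _ _ _ fun σ _ ↦ ?_
  exact_mod_cast (card_le_card (fill_subset _ T)).trans hT.card_le_choose

lemma IsHypertreeOn.exists_sq_sum_card_fill_le (hT : IsHypertreeOn (rng n) d T)
    (hpos : 0 < ∑ σ ∈ simplices (rng n) d, #(fill (bd {σ}) T)) :
    ∃ τ ∈ T, ∃ σ ∈ cut n d τ T, (∑ σ ∈ simplices (rng n) d, #(fill (bd {σ}) T)) ^ 2 ≤
      (n - 1).choose d * n.choose (d + 1) * (#(cut n d τ T) * #(fill (bd {σ}) T)) := by
  set E := (simplices (rng n) d).sigma fun σ ↦ fill (bd {σ}) T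
  have hcardE : #E = ∑ σ ∈ simplices (rng n) d, #(fill (bd {σ}) T) := card_sigma _ _
  rw [← hcardE] at hpos ⊢
  have hmemE {σ τ} : ⟨σ, τ⟩ ∈ E ↔ σ ∈ simplices (rng n) d ∧ τ ∈ fill (bd {σ}) T := mem_sigma
  obtain ⟨⟨σ, τ⟩, hστ, hle⟩ :=
    exists_sq_card_le_mul_card_fiber (card_pos.1 hpos) (fun e ↦ e.2) (fun e ↦ e.1)
  obtain ⟨hσ, hτ⟩ := hmemE.1 hστ
  have himage_snd : #(E.image fun e ↦ e.2) ≤ (n - 1).choose d := by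
    refine (card_le_card (image_subset_iff.2 fun e he ↦ ?_)).trans hT.card_le_choose
    exact fill_subset _ T (hmemE.1 he).2
  have himage_fst : #(E.image fun e ↦ e.1) ≤ n.choose (d + 1) := by
    rw [← card_simplices_rng]
    exact card_le_card (image_subset_iff.2 fun e he ↦ (hmemE.1 he).1)
  have hfiber_snd : #{e ∈ E | e.2 = τ} ≤ #(cut n d τ T) := by
    refine card_le_card_of_injOn Sigma.fst ?_ ?_
    · rintro ⟨ρ, _⟩ he
      obtain ⟨heE, rfl⟩ := mem_filter.1 he
      exact hT.mem_cut_of_mem_fill (hmemE.1 heE).1 (hmemE.1 heE).2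
    · rintro ⟨ρ, _⟩ he ⟨ρ', _⟩ he' rfl
      exact Sigma.ext rfl (heq_of_eq ((mem_filter.1 he).2.trans (mem_filter.1 he').2.symm))
  have hfiber_fst : #{e ∈ E | e.1 = σ} ≤ #(fill (bd {σ}) T) := by
    refine card_le_card_of_injOn Sigma.snd ?_ ?_
    · rintro ⟨_, ρ⟩ he
      obtain ⟨heE, rfl⟩ := mem_filter.1 he
      exact (hmemE.1 heE).2
    · rintro ⟨_, ρ⟩ he ⟨_, ρ'⟩ he' rfl
      exact Sigma.ext ((mem_filter.1 he).2.trans (mem_filter.1 he').2.symm) HEq.rfl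
  refine ⟨τ, fill_subset _ T hτ, σ, hT.mem_cut_of_mem_fill hσ hτ, hle.trans ?_⟩
  gcongr

end Hypertree

theorem exists_large_cut_and_fill_general (d n : ℕ) (hn : d + 1 ≤ n) (c : ℝ) (hc : 0 < c)
    (T : Finset (Finset ℕ)) (hT : IsHypertreeOn (rng n) d T)
    (hmu : c * ((n - 1).choose d : ℝ) ≤ fillVolAvg n d T) :
    ∃ τ ∈ T, ∃ σ ∈ cut n d τ T,
      c ^ 2 * (n.choose (d + 1) : ℝ) * ((n - 1).choose d : ℝ) ≤
        (#(cut n d τ T) : ℝ) * (#(fill (bd {σ}) T) : ℝ) := by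
  set N := n.choose (d + 1)
  set m := (n - 1).choose d
  have hN : (0 : ℝ) < N := Nat.cast_pos.2 (Nat.choose_pos hn)
  have hm : (0 : ℝ) < m := Nat.cast_pos.2 (Nat.choose_pos (by lia))
  have hedges : c * m * N ≤ ∑ σ ∈ simplices (rng n) d, (#(fill (bd {σ}) T) : ℝ) :=
    (le_div_iff₀ hN).1 hmu
  have hpos : 0 < ∑ σ ∈ simplices (rng n) d, #(fill (bd {σ}) T) := by
    exact_mod_cast (by positivity : 0 < c * m * N).trans_le hedges
  obtain ⟨τ, hτ, σ, hσ, hle⟩ := hT.exists_sq_sum_card_fill_le hpos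
  refine ⟨τ, hτ, σ, hσ, le_of_mul_le_mul_left ?_ (mul_pos hm hN)⟩
  calc m * N * (c ^ 2 * N * m) = (c * m * N) ^ 2 := by ring
    _ ≤ (∑ σ ∈ simplices (rng n) d, (#(fill (bd {σ}) T) : ℝ)) ^ 2 := by gcongr
    _ ≤ m * N * (#(cut n d τ T) * #(fill (bd {σ}) T)) := by exact_mod_cast hle

/-- In any `d`-hypertree `T` on `[n]` with average filling-volume `μ(T) ≥ c·C(n-1,d)`,
there are `τ ∈ T` and `σ ∈ Cut(τ,T)` with
`|Cut(τ,T)|·|Fill(σ,T)| ≥ (c³/8)·C(n,d+1)·C(n-1,d)`. -/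
theorem exists_large_cut_and_fill (d n : ℕ) (hd : 1 ≤ d) (hn : d + 1 ≤ n)
    (c : ℝ) (hc : 0 < c) (T : Finset (Finset ℕ)) (hT : IsHypertreeOn (rng n) d T)
    (hmu : c * ((n - 1).choose d : ℝ) ≤ fillVolAvg n d T) :
    ∃ τ ∈ T, ∃ σ ∈ cut n d τ T,
      c ^ 3 / 8 * (n.choose (d + 1) : ℝ) * ((n - 1).choose d : ℝ) ≤
        ((cut n d τ T).card : ℝ) * ((fill (bd {σ}) T).card : ℝ) := by
  have hm : (0 : ℝ) < (n - 1).choose d := Nat.cast_pos.2 (Nat.choose_pos (by lia))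
  have hc_le : c ≤ 1 := le_of_mul_le_mul_right
    (by simpa only [one_mul] using hmu.trans hT.fillVolAvg_le_choose) hm
  obtain ⟨τ, hτ, σ, hσ, hle⟩ := exists_large_cut_and_fill_general d n hn c hc T hT hmu
  have hconst : c ^ 3 / 8 ≤ c ^ 2 := by nlinarith [sq_nonneg c]
  exact ⟨τ, hτ, σ, hσ, le_trans (by gcongr) hle⟩
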